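/- Interior Big Pieces of Chord-Arc Domains implies the weak local John condition: if Ω ⊂ ℝ^{n+1} is a connected open set with ADR boundary satisfying IBPCAD with parameters η, C, R, then there exist θ ∈ (0,1], λ ∈ (0,1) depending only on η, C, R, n and the chord-arc constants, such that every X ∈ Ω with δ(X) < diam ∂Ω is a (θ,λ,R)-weak local John point. -/

import Mathlib

/-!
Write `δ = δ(X)` and let `D ⊆ Ω` be the chord-arc domain attached to `X`. The good set is
`F = ∂D ∩ Δ_X^R`, which has the required measure by hypothesis, so everything reduces to joining
each `y ∈ F` to `X` by a carrot path whose constant depends only on the parameters. Distance to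
`∂Ω` dominates distance to `∂D` inside `D`, so it is enough to work in `D`.

Take points `A 0 = X` and `A j`, `j ≥ 1`, with `dist (A j) y ≲ 2⁻ʲ δ ≲ dist (A j, ∂D)`. For `n ≥ 1`
these are corkscrew points of `D` at `y` (`exists_corkscrews`). Corkscrews exist only at scales below
`diam ∂D`, so a bound `diam ∂D ≳ δ` is needed: Ahlfors regularity of `∂D` and a covering argument
give `σ(∂D) ≲ (diam ∂D)ⁿ` (`exists_measure_le_of_adrSet`), while `σ(∂D) ≥ η σ(Δ_X^R) ≳ δⁿ`
(`lt_ediam_of_measure_le`). For `n = 0` this argument is void, but `D` is then an interval, and points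
on the segment from `y` to `X` serve instead (`exists_corkscrews_of_convex`).

Consecutive points `A j`, `A (j + 1)` are joined by Harnack chains of uniformly bounded length, and
along each chain the distance to `∂D` stays comparable to `2⁻ʲ δ`. Running through the chain gives
a polyline with a fixed number of edges of length `≲ 2⁻ʲ δ` (`exists_polyline_of_harnackChain`). The
concatenation of all these polylines converges to `y`, has finite length, and the length of its tail
after `A j` is `≲ 2⁻ʲ δ`, which is the carrot condition (`exists_carrot_of_corkscrews`). The arclength
parametrization of an infinite polyline of finite length is built in `exists_arclength_polyline`.
-/

open Metric MeasureTheory Set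

noncomputable section

/-- A `λ`-carrot path from `y ∈ ∂Ω` to `X`, given by its arclength parametrization `g` on
`[0, len]`. -/
structure CarrotPath (n : ℕ) (Ω : Set (EuclideanSpace ℝ (Fin (n+1)))) (lam : ℝ)
    (y X : EuclideanSpace ℝ (Fin (n+1))) where
  len : ℝ
  len_nonneg : 0 ≤ len
  g : ℝ → EuclideanSpace ℝ (Fin (n+1))
  source : g 0 = y
  target : g len = X
  arclength : ∀ t ∈ Set.Icc (0:ℝ) len, eVariationOn g (Set.Icc 0 t) = ENNReal.ofReal t
  mem : ∀ t ∈ Set.Ioc (0:ℝ) len, g t ∈ Ω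
  carrot : ∀ t ∈ Set.Icc (0:ℝ) len, lam * t ≤ Metric.infDist (g t) (frontier Ω)

/-- Distance between two sets. -/
def setDist {α : Type*} [MetricSpace α] (s t : Set α) : ℝ :=
  sInf {d : ℝ | ∃ x ∈ s, ∃ y ∈ t, d = dist x y}

/-- An `(M, m+1)`-Harnack chain of balls joining `X` to `X'` inside `D`. -/
def IsHarnackChain (n : ℕ) (D : Set (EuclideanSpace ℝ (Fin (n+1)))) (M : ℝ) (m : ℕ)
    (c : ℕ → EuclideanSpace ℝ (Fin (n+1))) (r : ℕ → ℝ)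
    (X X' : EuclideanSpace ℝ (Fin (n+1))) : Prop :=
  X ∈ Metric.ball (c 0) (r 0) ∧ X' ∈ Metric.ball (c m) (r m) ∧
  (∀ i < m, (Metric.ball (c i) (r i) ∩ Metric.ball (c (i+1)) (r (i+1))).Nonempty) ∧
  ∀ i ≤ m, 0 < r i ∧ Metric.ball (c i) (r i) ⊆ D ∧
    M⁻¹ * (2 * r i) ≤ setDist (Metric.ball (c i) (r i)) (frontier D) ∧
    setDist (Metric.ball (c i) (r i)) (frontier D) ≤ M * (2 * r i)

/-- The Harnack chain condition with constant `M` and chain-length function `N`. -/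
def HarnackChainCondition (n : ℕ) (D : Set (EuclideanSpace ℝ (Fin (n+1)))) (M : ℝ)
    (N : ℕ → ℕ) : Prop :=
  ∀ X ∈ D, ∀ X' ∈ D, ∀ k : ℕ,
    dist X X' ≤ 2 ^ k * min (Metric.infDist X (frontier D)) (Metric.infDist X' (frontier D)) →
    ∃ m : ℕ, m + 1 ≤ N k ∧ ∃ c r, IsHarnackChain n D M m c r X X'

/-- Corkscrew condition for `D` with corkscrew balls landing in `target`
(`target = D` gives the interior corkscrew, `target = (closure D)ᶜ` the exterior one). -/
def CorkscrewIn (n : ℕ) (D target : Set (EuclideanSpace ℝ (Fin (n+1)))) (cc : ℝ) : Prop :=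
  ∀ x ∈ frontier D, ∀ r : ℝ, 0 < r → ENNReal.ofReal r < EMetric.diam (frontier D) →
    ∃ X, Metric.ball X (cc * r) ⊆ Metric.ball x r ∩ target

/-- `F` is n-dimensional Ahlfors–David regular with constants `cA ≤ CA`. -/
def ADRSet (n : ℕ) (F : Set (EuclideanSpace ℝ (Fin (n+1)))) (cA CA : ℝ) : Prop :=
  ∀ x ∈ F, ∀ r : ℝ, 0 < r → ENNReal.ofReal r < EMetric.diam F →
    ENNReal.ofReal (cA * r ^ n) ≤ μH[(n : ℝ)] (Metric.ball x r ∩ F) ∧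
      μH[(n : ℝ)] (Metric.ball x r ∩ F) ≤ ENNReal.ofReal (CA * r ^ n)

/-- `D` is a chord-arc domain (CAD) with constants `(M, N, cc, cA, CA)`: a connected open
NTA set (Harnack chains, interior and exterior corkscrews) with ADR boundary. -/
def IsCAD (n : ℕ) (D : Set (EuclideanSpace ℝ (Fin (n+1)))) (M : ℝ) (N : ℕ → ℕ)
    (cc cA CA : ℝ) : Prop :=
  IsOpen D ∧ IsConnected D ∧ HarnackChainCondition n D M N ∧
    CorkscrewIn n D D cc ∧ CorkscrewIn n D ((closure D)ᶜ) cc ∧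
    ADRSet n (frontier D) cA CA

open Filter Topology

/-! ### Arclength parametrization of infinite polylines -/

theorem hasUnitSpeedOn_of_isometry {E : Type*} [MetricSpace E] {f : ℝ → E} {a b : ℝ}
    (h : ∀ u ∈ Icc a b, ∀ v ∈ Icc a b, dist (f u) (f v) = dist u v) :
    HasUnitSpeedOn f (Icc a b) := by
  unfold HasUnitSpeedOn
  rw [hasConstantSpeedOnWith_iff_ordered]
  intro x hx y hy hxy
  have hl : LipschitzOnWith 1 f (Icc a b) :=
    LipschitzOnWith.of_dist_le_mul fun u hu v hv => by simp [h u hu v hv]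
  apply le_antisymm
  · have h1 := hl.comp_eVariationOn_le (g := id) (s := Icc a b ∩ Icc x y)
      (fun u hu => hu.1)
    have h2 := (monotoneOn_id (s := Icc a b)).eVariationOn_eq hx hy
    rw [h2] at h1
    simpa using h1
  · have := eVariationOn.edist_le f (s := Icc a b ∩ Icc x y)
      (x := y) (y := x) ⟨hy, hxy, le_rfl⟩ ⟨hx, le_rfl, hxy⟩
    rw [edist_dist, h y hy x hx, Real.dist_eq, abs_of_nonneg (by linarith)] at this
    simpa using this

/-- An infinite polyline `q 0, q 1, …` converging to `y` whose edge lengths are dominated by the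
increments of a nonnegative potential `Φ` has finite length and an arclength parametrization
starting at the limit `y` and ending at `q 0`. The potential bounds the tail lengths: a point of the
edge `[q k, q (k + 1)]` has arclength parameter at most `Φ k`. Degenerate edges are allowed. -/
theorem exists_arclength_polyline {E : Type*} [NormedAddCommGroup E] [NormedSpace ℝ E]
    (q : ℕ → E) (y : E) (Φ : ℕ → ℝ) (hΦ : ∀ k, 0 ≤ Φ k)
    (hd : ∀ k, dist (q k) (q (k + 1)) ≤ Φ k - Φ (k + 1)) (hq : Tendsto q atTop (𝓝 y)) :
    ∃ (len : ℝ) (g : ℝ → E), 0 ≤ len ∧ g 0 = y ∧ g len = q 0 ∧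
      (∀ t ∈ Icc 0 len, eVariationOn g (Icc 0 t) = ENNReal.ofReal t) ∧
      ∀ t ∈ Ioc 0 len, ∃ k, t ≤ Φ k ∧ g t ∈ segment ℝ (q k) (q (k + 1)) := by
  have hsumle : ∀ k m, ∑ i ∈ Finset.range m, dist (q (k + i)) (q (k + i + 1)) ≤ Φ k := by
    intro k m
    have : ∑ i ∈ Finset.range m, dist (q (k + i)) (q (k + i + 1)) ≤ Φ k - Φ (k + m) := by
      induction m with
      | zero => simp
      | succ m ih => rw [Finset.sum_range_succ]; have := hd (k + m); rw [← add_assoc]; linarith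
    linarith [hΦ (k + m)]
  have hsm : ∀ k, Summable fun i => dist (q (k + i)) (q (k + i + 1)) := fun k =>
    summable_of_sum_range_le (fun _ => dist_nonneg) (hsumle k)
  -- `s k` is the length of the tail starting at `q k`, i.e. the arclength parameter of `q k`
  obtain ⟨s, hs⟩ : ∃ s : ℕ → ℝ, ∀ k, s k = ∑' i, dist (q (k + i)) (q (k + i + 1)) :=
    ⟨_, fun _ => rfl⟩
  have hs0 : ∀ k, 0 ≤ s k := fun k => by rw [hs]; exact tsum_nonneg fun _ => dist_nonneg
  have hsΦ : ∀ k, s k ≤ Φ k := fun k => by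
    rw [hs]; exact Real.tsum_le_of_sum_range_le (fun _ => dist_nonneg) (hsumle k)
  have hsucc : ∀ k, s k = dist (q k) (q (k + 1)) + s (k + 1) := fun k => by
    rw [hs, hs, (hsm k).tsum_eq_zero_add]
    simp only [add_zero]
    congr 1
    refine tsum_congr fun i => ?_
    rw [show k + (i + 1) = k + 1 + i by ring]
  have hanti : Antitone s := antitone_nat_of_succ_le fun k => by
    rw [hsucc k]; linarith [dist_nonneg (x := q k) (y := q (k + 1))]
  have hlim : Tendsto s atTop (𝓝 0) := by
    have := tendsto_sum_nat_add fun i => dist (q i) (q (i + 1))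
    refine this.congr fun k => ?_
    rw [hs]
    refine tsum_congr fun i => ?_
    rw [add_comm i k]
  have hsm0 : Summable fun n => dist (q n) (q n.succ) := by simpa using hsm 0
  have hqy : ∀ k, dist (q k) y ≤ s k := fun k => by
    rw [hs]; exact dist_le_tsum_dist_of_tendsto hsm0 hq k
  have hqq : ∀ j k, j ≤ k → dist (q j) (q k) ≤ s j - s k := by
    intro j k hjk
    induction k, hjk using Nat.le_induction with
    | base => simp
    | succ k hk ih =>
      have := hsucc k
      linarith [dist_triangle (q j) (q k) (q (k + 1))]
  -- the affine unit-speed piece on `[s (k+1), s k]`; for a degenerate segment the quotient is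
  -- `0 / 0 = 0`, giving the constant value `q (k+1) = q k`
  obtain ⟨φ, hφ⟩ : ∃ φ : ℕ → ℝ → E, ∀ k t, φ k t = AffineMap.lineMap (q (k + 1)) (q k)
      ((t - s (k + 1)) / (s k - s (k + 1))) := ⟨_, fun _ _ => rfl⟩
  have hφl : ∀ k, φ k (s (k + 1)) = q (k + 1) := fun k => by simp [hφ]
  have hφr : ∀ k, φ k (s k) = q k := fun k => by
    rw [hφ]
    rcases eq_or_ne (s k - s (k + 1)) 0 with h | h
    · have : dist (q k) (q (k + 1)) = 0 := by linarith [hsucc k]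
      rw [h, dist_eq_zero.1 this]; simp
    · rw [div_self h]; simp
  -- the pieces agree wherever their intervals overlap, so they glue to one map
  have hwd : ∀ j k t, j ≤ k → t ∈ Icc (s (j + 1)) (s j) → t ∈ Icc (s (k + 1)) (s k) →
      φ j t = φ k t := by
    intro j k t hjk hj hk
    rcases hjk.eq_or_lt with rfl | hlt
    · rfl
    · have h1 : s k ≤ s (j + 1) := hanti hlt
      have ht : t = s (j + 1) := le_antisymm (hk.2.trans h1) hj.1
      have ht' : t = s k := le_antisymm hk.2 (h1.trans hj.1)
      have := hqq (j + 1) k hlt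
      rw [← ht, ← ht', sub_self] at this
      rw [ht', hφr, ← ht', ht, hφl]
      exact dist_le_zero.1 this
  classical
  obtain ⟨g, hg⟩ : ∃ g : ℝ → E, ∀ t, g t = if h : ∃ k, t ∈ Icc (s (k + 1)) (s k) then
      φ h.choose t else y := ⟨_, fun _ => rfl⟩
  have hgφ : ∀ k, ∀ t ∈ Icc (s (k + 1)) (s k), g t = φ k t := by
    intro k t ht
    have h : ∃ k, t ∈ Icc (s (k + 1)) (s k) := ⟨k, ht⟩
    rw [hg, dif_pos h]
    rcases le_total h.choose k with hle | hle
    · exact hwd _ _ _ hle h.choose_spec ht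
    · exact (hwd _ _ _ hle ht h.choose_spec).symm
  have hgs : ∀ k, g (s k) = q k := fun k => by
    rw [hgφ k _ ⟨hanti (Nat.le_succ k), le_rfl⟩, hφr]
  have hg0 : g 0 = y := by
    by_cases h : ∃ k, (0:ℝ) ∈ Icc (s (k + 1)) (s k)
    · obtain ⟨k, hk⟩ := h
      have h0 : s (k + 1) = 0 := le_antisymm hk.1 (hs0 _)
      have := hqy (k + 1)
      rw [← h0, hgs]
      exact dist_le_zero.1 (this.trans h0.le)
    · rw [hg, dif_neg h]
  have hex : ∀ t ∈ Ioc 0 (s 0), ∃ k, t ∈ Ioc (s (k + 1)) (s k) := by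
    intro t ht
    have h : ∃ k, s k < t := ((hlim.eventually_lt_const ht.1)).exists
    have h1 := Nat.find_spec h
    have h2 : Nat.find h ≠ 0 := fun h0 => by rw [h0] at h1; linarith [ht.2]
    obtain ⟨k, hk⟩ := Nat.exists_eq_succ_of_ne_zero h2
    exact ⟨k, by rwa [hk] at h1, not_lt.1 (Nat.find_min h (by omega))⟩
  have hpiece : ∀ k, HasUnitSpeedOn g (Icc (s (k + 1)) (s k)) := by
    intro k
    refine hasUnitSpeedOn_of_isometry fun u hu v hv => ?_
    rw [hgφ k u hu, hgφ k v hv, hφ, hφ, dist_lineMap_lineMap, dist_comm (q (k + 1)),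
      show dist (q k) (q (k + 1)) = s k - s (k + 1) by linarith [hsucc k], Real.dist_eq,
      ← sub_div, abs_div, Real.dist_eq, sub_sub_sub_cancel_right]
    rcases eq_or_ne (s k - s (k + 1)) 0 with h | h
    · have : u = v := by linarith [hu.1, hu.2, hv.1, hv.2]
      simp [this]
    · have : 0 ≤ s k - s (k + 1) := by linarith [hu.1, hu.2]
      rw [abs_of_nonneg this, div_mul_cancel₀ _ h]
  have hunit : ∀ k, HasUnitSpeedOn g (Icc (s k) (s 0)) := by
    intro k
    induction k with
    | zero => rw [Icc_self]; exact hasConstantSpeedOnWith_of_subsingleton g subsingleton_singleton 1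
    | succ k ih => exact (hpiece k).Icc_Icc ih
  have hlow : ∀ t ∈ Ioc 0 (s 0), dist (g t) y ≤ t := by
    intro t ht
    obtain ⟨k, hk⟩ := hex t ht
    have h1 := hpiece k ⟨le_rfl, hanti (Nat.le_succ k)⟩ (y := t) ⟨hk.1.le, hk.2⟩
    have h2 := eVariationOn.edist_le g (s := Icc (s (k + 1)) (s k) ∩ Icc (s (k + 1)) t)
      (x := t) (y := s (k + 1)) ⟨⟨hk.1.le, hk.2⟩, hk.1.le, le_rfl⟩
      ⟨⟨le_rfl, hanti (Nat.le_succ k)⟩, le_rfl, hk.1.le⟩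
    rw [h1, edist_dist, NNReal.coe_one, one_mul,
      ENNReal.ofReal_le_ofReal_iff (by linarith [hk.1]), hgs] at h2
    linarith [dist_triangle (g t) (q (k + 1)) y, hqy (k + 1)]
  have hordered : ∀ u v, 0 ≤ u → u ≤ v → v ≤ s 0 → dist (g u) (g v) ≤ v - u := by
    intro u v hu huv hv
    rcases hu.eq_or_lt with rfl | hu
    · rcases huv.eq_or_lt with rfl | hv0
      · simp
      · rw [hg0, dist_comm]; simpa using hlow v ⟨hv0, hv⟩
    · obtain ⟨k, hk⟩ := hex u ⟨hu, huv.trans hv⟩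
      have h1 := hunit (k + 1) (x := u) ⟨hk.1.le, huv.trans hv⟩ (y := v)
        ⟨hk.1.le.trans huv, hv⟩
      have h2 := eVariationOn.edist_le g (s := Icc (s (k + 1)) (s 0) ∩ Icc u v)
        (x := u) (y := v) ⟨⟨hk.1.le, huv.trans hv⟩, le_rfl, huv⟩
        ⟨⟨hk.1.le.trans huv, hv⟩, huv, le_rfl⟩
      rwa [h1, edist_dist, NNReal.coe_one, one_mul,
        ENNReal.ofReal_le_ofReal_iff (by linarith)] at h2
  have hlip : LipschitzOnWith 1 g (Icc 0 (s 0)) :=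
    LipschitzOnWith.of_dist_le_mul fun u hu v hv => by
      rw [NNReal.coe_one, one_mul, Real.dist_eq]
      rcases le_total u v with h | h
      · rw [abs_sub_comm, abs_of_nonneg (by linarith)]; exact hordered u v hu.1 h hv.2
      · rw [dist_comm, abs_of_nonneg (by linarith)]; exact hordered v u hv.1 h hu.2
  refine ⟨s 0, g, hs0 0, hg0, hgs 0, ?_, ?_⟩
  · intro t ht
    apply le_antisymm
    · have h1 := hlip.comp_eVariationOn_le (g := id) (s := Icc 0 t)
        (fun u hu => ⟨hu.1, hu.2.trans ht.2⟩)
      have h2 := (monotoneOn_id (s := Icc (0:ℝ) t)).eVariationOn_eq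
        (left_mem_Icc.2 ht.1) (right_mem_Icc.2 ht.1)
      rw [inter_self] at h2
      rw [h2] at h1
      simpa using h1
    · rcases ht.1.eq_or_lt with h0 | h0
      · simp [← h0]
      -- the variation on `[0, t]` is at least the one on `[s k, t]`, namely `t - s k`, and `s k → 0`
      · have hl : Tendsto (fun k => ENNReal.ofReal (t - s k)) atTop
            (𝓝 (ENNReal.ofReal (t - 0))) :=
          ENNReal.tendsto_ofReal (tendsto_const_nhds.sub hlim)
        rw [sub_zero] at hl
        refine le_of_tendsto hl ?_
        filter_upwards [hlim.eventually_lt_const h0] with k hk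
        have h1 := hunit k (x := s k) ⟨le_rfl, hanti (Nat.zero_le k)⟩ (y := t) ⟨hk.le, ht.2⟩
        rw [NNReal.coe_one, one_mul] at h1
        rw [← h1]
        exact eVariationOn.mono _ fun u hu => ⟨(hs0 k).trans hu.2.1, hu.2.2⟩
  · intro t ht
    obtain ⟨k, hk⟩ := hex t ht
    refine ⟨k, hk.2.trans (hsΦ k), ?_⟩
    rw [hgφ k t ⟨hk.1.le, hk.2⟩, hφ, segment_symm, segment_eq_image_lineMap]
    have : 0 < s k - s (k + 1) := by linarith [hk.1, hk.2]
    exact ⟨_, ⟨div_nonneg (by linarith [hk.1]) this.le, (div_le_one this).2 (by linarith [hk.2])⟩,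
      rfl⟩

/-! ### Distance to the boundary and Harnack chains -/

theorem ball_subset_of_le_infDist_frontier {E : Type*} [NormedAddCommGroup E] [NormedSpace ℝ E]
    {D : Set E} (hD : IsOpen D) {p : E} (hp : p ∈ D) {r : ℝ}
    (hr : r ≤ infDist p (frontier D)) : ball p r ⊆ D := by
  rcases le_or_gt r 0 with h | h
  · rw [ball_eq_empty.2 h]; exact empty_subset _
  · refine (convex_ball p r).isPreconnected.subset_of_closure_inter_subset hD
      ⟨p, mem_ball_self h, hp⟩ fun x hx => ?_
    by_contra hxD
    have hxF : x ∈ frontier D := ⟨hx.1, by rwa [hD.interior_eq]⟩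
    have := infDist_le_dist_of_mem (x := p) hxF
    have := mem_ball'.1 hx.2
    linarith

theorem le_infDist_frontier_of_ball_subset {E : Type*} [NormedAddCommGroup E]
    {Ω : Set E} (hΩ : IsOpen Ω) (hne : (frontier Ω).Nonempty) {p : E} {r : ℝ}
    (h : ball p r ⊆ Ω) : r ≤ infDist p (frontier Ω) := by
  rw [le_infDist hne]
  intro z hz
  by_contra hlt
  have : z ∈ Ω := h (mem_ball'.2 (not_le.1 hlt))
  rw [hΩ.frontier_eq] at hz
  exact hz.2 this

theorem setDist_ball_le_infDist {E : Type*} [MetricSpace E] {F : Set E}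
    (hF : F.Nonempty) {c x : E} {r : ℝ} (hx : x ∈ ball c r) :
    setDist (ball c r) F ≤ infDist x F := by
  rw [le_infDist hF]
  intro z hz
  refine csInf_le ⟨0, ?_⟩ ⟨x, hx, z, hz, rfl⟩
  rintro d ⟨a, -, b, -, rfl⟩
  exact dist_nonneg

theorem infDist_le_setDist_ball_add {E : Type*} [MetricSpace E] {F : Set E}
    (hF : F.Nonempty) {c x : E} {r : ℝ} (hx : x ∈ ball c r) :
    infDist x F ≤ setDist (ball c r) F + 2 * r := by
  rw [← sub_le_iff_le_add]
  obtain ⟨z, hz⟩ := hF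
  refine le_csInf ⟨_, x, hx, z, hz, rfl⟩ ?_
  rintro d ⟨x', hx', z', hz', rfl⟩
  have h1 := infDist_le_dist_of_mem (x := x) hz'
  have h2 := dist_triangle x x' z'
  have h3 := dist_triangle_right x x' c
  have := mem_ball.1 hx
  have := mem_ball.1 hx'
  linarith

/-- A Harnack chain of at most `K` balls contains a polyline from `U` to `V` with exactly `K` edges
(the last ones possibly degenerate). Within each ball the distances to `∂D` agree up to the factor
`M (M + 1)`, so after `K` balls both the edge lengths and the distance to `∂D` along the polyline are
controlled by the distance of `U` to `∂D`. -/
theorem exists_polyline_of_harnackChain {n : ℕ} {D : Set (EuclideanSpace ℝ (Fin (n+1)))}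
    {M : ℝ} (hM : 1 ≤ M) (hF : (frontier D).Nonempty) {m K : ℕ} (hK : m + 1 ≤ K)
    {c : ℕ → EuclideanSpace ℝ (Fin (n+1))} {r : ℕ → ℝ} {U V : EuclideanSpace ℝ (Fin (n+1))}
    (h : IsHarnackChain n D M m c r U V) :
    ∃ P : ℕ → EuclideanSpace ℝ (Fin (n+1)), P 0 = U ∧ P K = V ∧ ∀ i < K,
      dist (P i) (P (i + 1)) ≤ M * (M * (M + 1)) ^ K * infDist U (frontier D) ∧
      ∀ p ∈ segment ℝ (P i) (P (i + 1)),
        p ∈ D ∧ infDist U (frontier D) ≤ (M * (M + 1)) ^ K * infDist p (frontier D) := by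
  obtain ⟨hU, hV, hint, hball⟩ := h
  obtain ⟨Q, hQ⟩ : ∃ Q, Q = M * (M + 1) := ⟨_, rfl⟩
  have hQ1 : 1 ≤ Q := by rw [hQ]; nlinarith
  rw [← hQ]
  have hM0 : 0 < M := by linarith
  have hrM : ∀ i ≤ m, ∀ p ∈ ball (c i) (r i), 2 * r i ≤ M * infDist p (frontier D) := by
    intro i hi p hp
    have h1 := (hball i hi).2.2.1
    have h2 := setDist_ball_le_infDist hF hp
    rw [inv_mul_le_iff₀ hM0] at h1
    exact h1.trans (mul_le_mul_of_nonneg_left h2 hM0.le)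
  have hcomp : ∀ i ≤ m, ∀ p ∈ ball (c i) (r i), ∀ p' ∈ ball (c i) (r i),
      infDist p (frontier D) ≤ Q * infDist p' (frontier D) := by
    intro i hi p hp p' hp'
    have h1 := (hball i hi).2.2.2
    have h2 := infDist_le_setDist_ball_add hF hp
    have h3 := hrM i hi p' hp'
    rw [hQ]
    nlinarith
  choose! z hz using hint
  -- `P i` and `P (i + 1)` both lie in the `i`-th ball for `i ≤ m`; afterwards `P` stays at `V`
  obtain ⟨P, hP⟩ : ∃ P : ℕ → EuclideanSpace ℝ (Fin (n+1)), ∀ i, P i =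
    if i = 0 then U else if i ≤ m then z (i - 1) else V := ⟨_, fun _ => rfl⟩
  have hP1 : ∀ i ≤ m, P i ∈ ball (c i) (r i) := by
    intro i hi
    rcases i with _ | i
    · simpa [hP] using hU
    · simpa [hP, hi] using (hz i (by omega)).2
  have hP2 : ∀ i ≤ m, P (i + 1) ∈ ball (c i) (r i) := by
    intro i hi
    rcases hi.eq_or_lt with rfl | hi
    · simpa [hP] using hV
    · simpa [hP, Nat.succ_le_of_lt hi] using (hz i hi).1
  have hP3 : ∀ i, m < i → P i = V := by
    intro i hi
    rw [hP, if_neg (by omega), if_neg (by omega)]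
  have hacc : ∀ i ≤ m, ∀ p ∈ ball (c i) (r i),
      infDist U (frontier D) ≤ Q ^ (i + 1) * infDist p (frontier D) ∧
      infDist p (frontier D) ≤ Q ^ (i + 1) * infDist U (frontier D) := by
    intro i
    induction i with
    | zero =>
      intro hi p hp
      simpa using ⟨hcomp 0 hi U hU p hp, hcomp 0 hi p hp U hU⟩
    | succ i ih =>
      intro hi p hp
      obtain ⟨h1, h2⟩ := ih (by omega) (P (i + 1)) (hP2 i (by omega))
      have h3 := hcomp (i + 1) hi _ (hP1 (i + 1) hi) p hp
      have h4 := hcomp (i + 1) hi p hp _ (hP1 (i + 1) hi)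
      have hQi : 0 ≤ Q ^ (i + 1) := by positivity
      constructor
      · calc _ ≤ _ := h1
          _ ≤ Q ^ (i + 1) * (Q * infDist p (frontier D)) := by gcongr
          _ = _ := by ring
      · calc _ ≤ _ := h4
          _ ≤ Q * (Q ^ (i + 1) * infDist U (frontier D)) := by gcongr
          _ = _ := by ring
  have hpow : ∀ i ≤ m, Q ^ (i + 1) ≤ Q ^ K := fun i hi =>
    pow_le_pow_right₀ hQ1 (by omega)
  refine ⟨P, by simp [hP], hP3 K (by omega), fun i hi => ?_⟩
  have hd0 : ∀ p, 0 ≤ infDist p (frontier D) := fun p => infDist_nonneg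
  rcases le_or_gt i m with him | him
  · constructor
    · have h1 := mem_ball.1 (hP1 i him)
      have h2 := mem_ball.1 (hP2 i him)
      have h3 := dist_triangle_right (P i) (P (i + 1)) (c i)
      have h4 := hrM i him _ (hP1 i him)
      have h5 := (hacc i him _ (hP1 i him)).2
      calc dist (P i) (P (i + 1)) ≤ M * infDist (P i) (frontier D) := by linarith
        _ ≤ M * (Q ^ K * infDist U (frontier D)) := by
          gcongr
          exact h5.trans (mul_le_mul_of_nonneg_right (hpow i him) (hd0 U))
        _ = _ := by ring
    · intro p hp
      have hpB := (convex_ball (c i) (r i)).segment_subset (hP1 i him) (hP2 i him) hp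
      exact ⟨(hball i him).2.1 hpB, (hacc i him p hpB).1.trans
        (mul_le_mul_of_nonneg_right (hpow i him) (hd0 p))⟩
  · rw [hP3 i him, hP3 (i + 1) (by omega)]
    constructor
    · rw [dist_self]; have := hd0 U; positivity
    · intro p hp
      rw [segment_same, mem_singleton_iff] at hp
      subst hp
      exact ⟨(hball m le_rfl).2.1 hV, (hacc m le_rfl p hV).1.trans
        (mul_le_mul_of_nonneg_right (hpow m le_rfl) (hd0 p))⟩

/-! ### Carrot paths from sequences of corkscrew points -/

/-- If points `A j ∈ D` approach `y ∈ ∂D` with `dist (A j) y` at most `R δ / 2 ^ j` and distance to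
`∂D` at least `a δ / 2 ^ j`, then `y` is joined to `A 0` by a carrot path in any open `Ω ⊇ D`. The
constant `lam` depends only on `a`, `R`, `M` and the chain length `N k`. -/
theorem exists_carrot_of_corkscrews {n : ℕ} {D Ω : Set (EuclideanSpace ℝ (Fin (n+1)))}
    (hΩ : IsOpen Ω) (hΩF : (frontier Ω).Nonempty) (hD : IsOpen D) (hDΩ : D ⊆ Ω)
    {M : ℝ} (hM : 1 ≤ M) {N : ℕ → ℕ} (hH : HarnackChainCondition n D M N)
    {y : EuclideanSpace ℝ (Fin (n+1))} (hy : y ∈ frontier D)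
    {a R δ lam : ℝ} (ha : 0 < a) (hR : 0 < R) (hδ : 0 < δ) {k : ℕ} (hk : 4 * R ≤ 2 ^ k * a)
    (hlam : 0 ≤ lam)
    (hlam' : lam * (2 * N k * (M * (M * (M + 1)) ^ N k * R)) * (M * (M + 1)) ^ N k ≤ a)
    {A : ℕ → EuclideanSpace ℝ (Fin (n+1))} (hAD : ∀ j, A j ∈ D)
    (hAa : ∀ j, a * (δ / 2 ^ j) ≤ infDist (A j) (frontier D))
    (hAR : ∀ j, dist (A j) y ≤ R * (δ / 2 ^ j)) :
    Nonempty (CarrotPath n Ω lam y (A 0)) := by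
  have hF : (frontier D).Nonempty := ⟨y, hy⟩
  obtain ⟨K, hK⟩ : ∃ K, K = N k := ⟨_, rfl⟩
  obtain ⟨Q, hQ⟩ : ∃ Q, Q = M * (M + 1) := ⟨_, rfl⟩
  rw [← hK, ← hQ] at hlam'
  have hQ0 : 0 < Q := by rw [hQ]; nlinarith
  obtain ⟨ρ, hρ⟩ : ∃ ρ : ℕ → ℝ, ∀ j, ρ j = δ / 2 ^ j := ⟨_, fun _ => rfl⟩
  simp only [← hρ] at hAa hAR
  have hρ0 : ∀ j, 0 < ρ j := fun j => by rw [hρ]; positivity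
  have hρs : ∀ j, ρ j = 2 * ρ (j + 1) := fun j => by rw [hρ, hρ, pow_succ]; field_simp
  obtain ⟨L, hL⟩ : ∃ L, L = M * Q ^ K * R := ⟨_, rfl⟩
  have hL0 : 0 < L := by rw [hL]; positivity
  have hchain : ∀ j, 0 < K ∧ ∃ P : ℕ → EuclideanSpace ℝ (Fin (n+1)),
      P 0 = A j ∧ P K = A (j + 1) ∧
      ∀ i < K, dist (P i) (P (i + 1)) ≤ L * ρ j ∧ ∀ p ∈ segment ℝ (P i) (P (i + 1)),
        p ∈ D ∧ a * ρ j ≤ Q ^ K * infDist p (frontier D) := by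
    intro j
    have h1 : dist (A j) (A (j + 1)) ≤ 2 ^ k *
        min (infDist (A j) (frontier D)) (infDist (A (j + 1)) (frontier D)) := by
      have h2 := dist_triangle_right (A j) (A (j + 1)) y
      have h3 := hAR j
      have h4 := hAR (j + 1)
      have h5 : a * ρ (j + 1) ≤
          min (infDist (A j) (frontier D)) (infDist (A (j + 1)) (frontier D)) := by
        refine le_min ((mul_le_mul_of_nonneg_left ?_ ha.le).trans (hAa j)) (hAa (j + 1))
        linarith [hρs j, hρ0 (j + 1)]
      calc dist (A j) (A (j + 1)) ≤ 4 * R * ρ (j + 1) := by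
            rw [hρs j] at h3; nlinarith [hρ0 (j + 1)]
        _ ≤ 2 ^ k * a * ρ (j + 1) := mul_le_mul_of_nonneg_right hk (hρ0 _).le
        _ = 2 ^ k * (a * ρ (j + 1)) := by ring
        _ ≤ _ := by gcongr
    obtain ⟨m, hm, c, r, hc⟩ := hH _ (hAD j) _ (hAD (j + 1)) k h1
    rw [← hK] at hm
    obtain ⟨P, hP0, hPK, hP⟩ := exists_polyline_of_harnackChain hM hF hm hc
    refine ⟨by omega, P, hP0, hPK, fun i hi => ?_⟩
    rw [← hQ] at hP
    refine ⟨(hP i hi).1.trans ?_, fun p hp => ⟨((hP i hi).2 p hp).1,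
      (hAa j).trans ((hP i hi).2 p hp).2⟩⟩
    have : infDist (A j) (frontier D) ≤ R * ρ j := (infDist_le_dist_of_mem hy).trans (hAR j)
    calc M * Q ^ K * infDist (A j) (frontier D) ≤ M * Q ^ K * (R * ρ j) := by gcongr
      _ = L * ρ j := by rw [hL]; ring
  have hK0 := (hchain 0).1
  choose P hP0 hPK hP using fun j => (hchain j).2
  -- the concatenated polyline: the `i`-th vertex of the `j`-th chain has index `K * j + i`;
  -- the potential `Φ` drops by `L * ρ j` along each edge of the `j`-th chain, and the factor `2 * K`
  -- makes it match up between chains, because `ρ j = 2 * ρ (j + 1)`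
  obtain ⟨q, hq⟩ : ∃ q : ℕ → EuclideanSpace ℝ (Fin (n+1)), ∀ l, q l = P (l / K) (l % K) :=
    ⟨_, fun _ => rfl⟩
  obtain ⟨Φ, hΦ⟩ : ∃ Φ : ℕ → ℝ, ∀ l, Φ l = L * ρ (l / K) * (2 * K - (l % K : ℕ)) :=
    ⟨_, fun _ => rfl⟩
  have hsplit : ∀ l, ∃ j i, i < K ∧ l = K * j + i := fun l =>
    ⟨l / K, l % K, Nat.mod_lt _ hK0, (Nat.div_add_mod l K).symm⟩
  have hdiv : ∀ j i, i < K → (K * j + i) / K = j ∧ (K * j + i) % K = i := fun j i hi =>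
    ⟨by rw [Nat.mul_add_div hK0, Nat.div_eq_of_lt hi, add_zero],
      by rw [Nat.mul_add_mod, Nat.mod_eq_of_lt hi]⟩
  have hq1 : ∀ j i, i < K → q (K * j + i) = P j i := fun j i hi => by
    rw [hq, (hdiv j i hi).1, (hdiv j i hi).2]
  have hq2 : ∀ j i, i < K → q (K * j + i + 1) = P j (i + 1) := fun j i hi => by
    rcases Nat.lt_or_ge (i + 1) K with h | h
    · rw [add_assoc, hq1 j _ h]
    · have : i + 1 = K := by omega
      rw [add_assoc, this, hPK, show K * j + K = K * (j + 1) + 0 by ring, hq1 _ 0 hK0, hP0]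
  have hΦ1 : ∀ j i, i < K → Φ (K * j + i) = L * ρ j * (2 * K - i) := fun j i hi => by
    rw [hΦ, (hdiv j i hi).1, (hdiv j i hi).2]
  have hΦ2 : ∀ j i, i < K → Φ (K * j + i + 1) = L * ρ j * (2 * K - (i + 1)) := fun j i hi => by
    rcases Nat.lt_or_ge (i + 1) K with h | h
    · rw [add_assoc, hΦ1 j _ h]; push_cast; ring
    · have h1 : i + 1 = K := by omega
      have h2 : (K : ℝ) = i + 1 := by rw [← h1]; push_cast; ring
      rw [add_assoc, h1, show K * j + K = K * (j + 1) + 0 by ring, hΦ1 _ 0 hK0, hρs j, h2]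
      push_cast; ring
  have hΦ0 : ∀ l, 0 ≤ Φ l := fun l => by
    obtain ⟨j, i, hi, rfl⟩ := hsplit l
    rw [hΦ1 j i hi]
    have : (i : ℝ) < K := by exact_mod_cast hi
    exact mul_nonneg (mul_pos hL0 (hρ0 j)).le (by linarith [(Nat.cast_nonneg i : (0:ℝ) ≤ i)])
  have hΦle : ∀ j i, i < K → Φ (K * j + i) ≤ 2 * K * L * ρ j := fun j i hi => by
    rw [hΦ1 j i hi]
    have := mul_nonneg (mul_pos hL0 (hρ0 j)).le (Nat.cast_nonneg i : (0:ℝ) ≤ i)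
    linarith
  have hdist : ∀ l, dist (q l) (q (l + 1)) ≤ Φ l - Φ (l + 1) := fun l => by
    obtain ⟨j, i, hi, rfl⟩ := hsplit l
    rw [hq1 j i hi, hq2 j i hi, hΦ1 j i hi, hΦ2 j i hi]
    linarith [(hP j i hi).1]
  have hPd : ∀ j i, i < K → dist (P j i) (A j) ≤ i * (L * ρ j) := by
    intro j i
    induction i with
    | zero => intro _; simp [hP0]
    | succ i ih =>
      intro hi
      have h1 := (hP j i (by omega)).1
      have h2 := ih (by omega)
      have h3 := dist_triangle_left (P j (i + 1)) (A j) (P j i)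
      push_cast
      linarith
  have hρlim : Filter.Tendsto ρ Filter.atTop (𝓝 0) := by
    have := (tendsto_pow_atTop_nhds_zero_of_lt_one (r := (1/2 : ℝ)) (by norm_num)
      (by norm_num)).const_mul δ
    rw [mul_zero] at this
    refine this.congr fun j => ?_
    rw [hρ, one_div, inv_pow]; rfl
  have hqlim : Filter.Tendsto q Filter.atTop (𝓝 y) := by
    rw [tendsto_iff_dist_tendsto_zero]
    have h1 : Filter.Tendsto (fun l => (K * L + R) * ρ (l / K)) Filter.atTop (𝓝 0) := by
      have := (hρlim.comp (Nat.tendsto_div_const_atTop hK0.ne')).const_mul (K * L + R)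
      rwa [mul_zero] at this
    refine squeeze_zero (fun _ => dist_nonneg) (fun l => ?_) h1
    obtain ⟨j, i, hi, rfl⟩ := hsplit l
    rw [hq1 j i hi, (hdiv j i hi).1]
    have h2 := dist_triangle (P j i) (A j) y
    have h3 := hPd j i hi
    have h4 := hAR j
    have h5 : (i : ℝ) * (L * ρ j) ≤ K * (L * ρ j) :=
      mul_le_mul_of_nonneg_right (by exact_mod_cast hi.le) (mul_pos hL0 (hρ0 j)).le
    linarith
  obtain ⟨len, g, hlen, hg0, hgl, harc, hseg⟩ := exists_arclength_polyline q y Φ hΦ0 hdist hqlim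
  have hmain : ∀ t ∈ Ioc 0 len, g t ∈ D ∧ lam * t ≤ infDist (g t) (frontier D) := by
    intro t ht
    obtain ⟨l, htl, hgt⟩ := hseg t ht
    obtain ⟨j, i, hi, rfl⟩ := hsplit l
    rw [hq1 j i hi, hq2 j i hi] at hgt
    obtain ⟨h1, h2⟩ := (hP j i hi).2 _ hgt
    refine ⟨h1, ?_⟩
    have h3 : t ≤ 2 * K * L * ρ j := htl.trans (hΦle j i hi)
    have hQK : 0 < Q ^ K := by positivity
    rw [← hL] at hlam'
    refine le_of_mul_le_mul_left ?_ hQK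
    calc Q ^ K * (lam * t) ≤ Q ^ K * (lam * (2 * K * L * ρ j)) := by gcongr
      _ = lam * (2 * K * L) * Q ^ K * ρ j := by ring
      _ ≤ a * ρ j := mul_le_mul_of_nonneg_right hlam' (hρ0 j).le
      _ ≤ _ := h2
  have hqA : q 0 = A 0 := by have := hq1 0 0 hK0; rw [mul_zero] at this; rw [this, hP0]
  refine ⟨⟨len, hlen, g, hg0, hgl.trans hqA, harc, fun t ht => hDΩ (hmain t ht).1,
    fun t ht => ?_⟩⟩
  rcases ht.1.eq_or_lt with rfl | h0
  · rw [mul_zero]; exact infDist_nonneg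
  · obtain ⟨h1, h2⟩ := hmain t ⟨h0, ht.2⟩
    exact h2.trans (le_infDist_frontier_of_ball_subset hΩ hΩF
      ((ball_subset_of_le_infDist_frontier hD h1 le_rfl).trans hDΩ))

/-! ### Size of the boundary -/

/-- The total mass of an Ahlfors regular set of diameter `d` is `≲ d ^ n`. Regularity is only available
at scales below `d`, so the set is covered by a number of balls of radius `d / 4` depending on `n` only. -/
theorem exists_measure_le_of_adrSet (n : ℕ) :
    ∃ K : ℕ, ∀ (F : Set (EuclideanSpace ℝ (Fin (n+1)))) (cA CA d : ℝ), ADRSet n F cA CA →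
      0 < d → Metric.ediam F = ENNReal.ofReal d →
      μH[(n : ℝ)] F ≤ K * ENNReal.ofReal (CA * (d / 2) ^ n) := by
  obtain ⟨t, -, htf, ht⟩ := finite_cover_balls_of_compact
    (isCompact_closedBall (0 : EuclideanSpace ℝ (Fin (n+1))) 1) (e := 1 / 4) (by norm_num)
  refine ⟨htf.toFinset.card, fun F cA CA d hF hd hdF => ?_⟩
  rcases F.eq_empty_or_nonempty with rfl | ⟨x, hx⟩
  · simp
  have hpiece : ∀ z, μH[(n : ℝ)] (ball (x + d • z) (d / 4) ∩ F) ≤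
      ENNReal.ofReal (CA * (d / 2) ^ n) := by
    intro z
    rcases (ball (x + d • z) (d / 4) ∩ F).eq_empty_or_nonempty with h | ⟨w, hw⟩
    · rw [h]; simp
    · refine (measure_mono ?_).trans (hF w hw.2 (d / 2) (by linarith) ?_).2
      · refine inter_subset_inter_left _ (ball_subset_ball' ?_)
        have := mem_ball'.1 hw.1
        linarith
      · exact lt_of_lt_of_eq ((ENNReal.ofReal_lt_ofReal_iff hd).2 (by linarith)) hdF.symm
  have hcov : F ⊆ ⋃ z ∈ htf.toFinset, ball (x + d • z) (d / 4) ∩ F := by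
    intro p hp
    have h1 : dist p x ≤ d := by
      have := Metric.edist_le_ediam_of_mem hp hx
      rwa [hdF, edist_dist, ENNReal.ofReal_le_ofReal_iff hd.le] at this
    have h2 : d⁻¹ • (p - x) ∈ closedBall (0 : EuclideanSpace ℝ (Fin (n+1))) 1 := by
      rw [mem_closedBall_zero_iff, norm_smul, norm_inv, Real.norm_of_nonneg hd.le, ← dist_eq_norm,
        inv_mul_le_iff₀ hd]
      linarith
    obtain ⟨z, hz, hpz⟩ := mem_iUnion₂.1 (ht h2)
    refine mem_iUnion₂.2 ⟨z, htf.mem_toFinset.2 hz, ?_, hp⟩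
    rw [mem_ball, dist_eq_norm] at hpz ⊢
    have h3 : p - (x + d • z) = d • (d⁻¹ • (p - x) - z) := by
      rw [smul_sub, smul_inv_smul₀ hd.ne']; abel
    rw [h3, norm_smul, Real.norm_of_nonneg hd.le]
    nlinarith
  calc μH[(n : ℝ)] F ≤ μH[(n : ℝ)] (⋃ z ∈ htf.toFinset, ball (x + d • z) (d / 4) ∩ F) :=
        measure_mono hcov
    _ ≤ ∑ z ∈ htf.toFinset, μH[(n : ℝ)] (ball (x + d • z) (d / 4) ∩ F) :=
        measure_biUnion_finset_le _ _
    _ ≤ ∑ z ∈ htf.toFinset, ENNReal.ofReal (CA * (d / 2) ^ n) :=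
        Finset.sum_le_sum fun z _ => hpiece z
    _ = _ := by simp

/-- An Ahlfors regular set of mass at least `b δ ^ n` has diameter larger than `c₀ δ`, if `n ≠ 0`
and `K CA c₀ < b`. The bound `K`, `hK` is the one of `exists_measure_le_of_adrSet`. -/
theorem lt_ediam_of_measure_le {n : ℕ} (hn : n ≠ 0) {K : ℕ}
    (hK : ∀ (F : Set (EuclideanSpace ℝ (Fin (n+1)))) (cA CA d : ℝ), ADRSet n F cA CA →
      0 < d → Metric.ediam F = ENNReal.ofReal d →
      μH[(n : ℝ)] F ≤ K * ENNReal.ofReal (CA * (d / 2) ^ n))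
    {F : Set (EuclideanSpace ℝ (Fin (n+1)))} {cA CA c₀ δ b : ℝ} (hF : ADRSet n F cA CA)
    (hCA : 0 < CA) (hc₀ : 0 < c₀) (hc₁ : c₀ ≤ 1) (hδ : 0 < δ) (hb : 0 < b)
    (hc : K * CA * c₀ < b) (hm : ENNReal.ofReal (b * δ ^ n) ≤ μH[(n : ℝ)] F) :
    ENNReal.ofReal (c₀ * δ) < Metric.ediam F := by
  by_contra hle
  rw [not_lt] at hle
  have hbδ : 0 < b * δ ^ n := by positivity
  have hfin : Metric.ediam F ≠ ⊤ := ne_top_of_le_ne_top ENNReal.ofReal_ne_top hle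
  have hdF := (ENNReal.ofReal_toReal hfin).symm
  obtain ⟨d, hd⟩ : ∃ d, d = (Metric.ediam F).toReal := ⟨_, rfl⟩
  rw [← hd] at hdF
  rcases (hd ▸ ENNReal.toReal_nonneg : 0 ≤ d).eq_or_lt with h0 | h0
  · rw [← h0, ENNReal.ofReal_zero, Metric.ediam_eq_zero_iff] at hdF
    have : NullSingletonClass (μH[(n : ℝ)] : Measure (EuclideanSpace ℝ (Fin (n+1)))) :=
      Measure.nullSingletonClass_hausdorff _ (by positivity)
    rw [hdF.measure_zero] at hm
    exact absurd hm (not_le.2 (ENNReal.ofReal_pos.2 hbδ))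
  · have h1 := hm.trans (hK F cA CA d hF h0 hdF)
    rw [← ENNReal.ofReal_natCast, ← ENNReal.ofReal_mul (by positivity),
      ENNReal.ofReal_le_ofReal_iff (by positivity)] at h1
    rw [hdF, ENNReal.ofReal_le_ofReal_iff (by positivity)] at hle
    have h2 : (d / 2) ^ n ≤ c₀ * δ ^ n := calc
      (d / 2) ^ n ≤ (c₀ * δ) ^ n := by gcongr; linarith
      _ = c₀ ^ n * δ ^ n := mul_pow _ _ _
      _ ≤ c₀ * δ ^ n := by
        gcongr
        exact pow_le_of_le_one hc₀.le hc₁ hn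
    have h3 : K * (CA * (d / 2) ^ n) ≤ K * CA * c₀ * δ ^ n := calc
      _ ≤ K * (CA * (c₀ * δ ^ n)) := by gcongr
      _ = _ := by ring
    have h4 : K * CA * c₀ * δ ^ n < b * δ ^ n := by gcongr
    linarith

/-- As `R ≥ 2`, the surface ball of `X` contains the one of radius `dist (X, F)` at a nearest point
of `F`. -/
theorem le_measure_surfaceBall {n : ℕ} {F : Set (EuclideanSpace ℝ (Fin (n+1)))} {cA CA R : ℝ}
    (hR : 2 ≤ R) (hF : ADRSet n F cA CA) (hFc : IsClosed F) (hne : F.Nonempty)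
    {X : EuclideanSpace ℝ (Fin (n+1))} (hδ : 0 < infDist X F)
    (hdiam : ENNReal.ofReal (infDist X F) < Metric.ediam F) :
    ENNReal.ofReal (cA * infDist X F ^ n) ≤ μH[(n : ℝ)] (ball X (R * infDist X F) ∩ F) := by
  obtain ⟨x, hx, hxd⟩ := hFc.exists_infDist_eq_dist hne X
  refine (hF x hx _ hδ hdiam).1.trans (measure_mono (inter_subset_inter_left _
    (ball_subset_ball' ?_)))
  rw [dist_comm, ← hxd]
  nlinarith

/-! ### Corkscrew points approaching a boundary point -/

theorem convex_of_isPreconnected_fin_one {D : Set (EuclideanSpace ℝ (Fin (0+1)))}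
    (hD : IsPreconnected D) : Convex ℝ D := by
  have hcont : Continuous fun x : EuclideanSpace ℝ (Fin (0+1)) => x 0 := by fun_prop
  have hI : Convex ℝ ((fun x : EuclideanSpace ℝ (Fin (0+1)) => x 0) '' D) :=
    (hD.image _ hcont.continuousOn).ordConnected.convex
  intro x hx y hy a b ha hb hab
  obtain ⟨w, hw, hwe⟩ := hI (mem_image_of_mem _ hx) (mem_image_of_mem _ hy) ha hb hab
  have : w = a • x + b • y := by
    ext i
    rw [show i = 0 from Fin.ext (by omega)]
    simpa using hwe
  exact this ▸ hw

/-- In a convex open set the points on the segment from a boundary point `y` to `X` are corkscrew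
points: the cone with vertex `y` over a ball around `X` lies in the set. -/
theorem exists_corkscrews_of_convex {E : Type*} [NormedAddCommGroup E] [NormedSpace ℝ E]
    {D : Set E} (hD : IsOpen D) (hconv : Convex ℝ D) {X y : E} (hX : X ∈ D)
    (hy : y ∈ frontier D) (hr : 0 < infDist X (frontier D)) :
    ∃ A : ℕ → E, A 0 = X ∧ (∀ j, A j ∈ D) ∧
      (∀ j, infDist X (frontier D) / 2 ^ j ≤ infDist (A j) (frontier D)) ∧
      ∀ j, dist (A j) y = dist X y / 2 ^ j := by
  obtain ⟨A, hA⟩ : ∃ A : ℕ → E, ∀ j, A j = (1 - (2 ^ j)⁻¹ : ℝ) • y + ((2 ^ j)⁻¹ : ℝ) • X :=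
    ⟨_, fun _ => rfl⟩
  have hball : ∀ j, ball (A j) (infDist X (frontier D) / 2 ^ j) ⊆ D := by
    intro j w hw
    have h2 : (0 : ℝ) < 2 ^ j := by positivity
    have h2' : ((2 : ℝ) ^ j)⁻¹ ≤ 1 := inv_le_one_of_one_le₀ (one_le_pow₀ (by norm_num))
    have hv : X + (2 ^ j : ℝ) • (w - A j) ∈ interior D := by
      rw [hD.interior_eq]
      refine ball_subset_of_le_infDist_frontier hD hX le_rfl ?_
      rw [mem_ball, dist_eq_norm, lt_div_iff₀ h2] at hw
      rw [mem_ball, dist_eq_norm, add_sub_cancel_left, norm_smul, Real.norm_of_nonneg h2.le]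
      linarith
    have h3 := hconv.combo_closure_interior_mem_interior (frontier_subset_closure hy) hv
      (a := 1 - (2 ^ j)⁻¹) (b := (2 ^ j)⁻¹) (by linarith) (by positivity) (by ring)
    rw [hD.interior_eq, smul_add, inv_smul_smul₀ h2.ne', ← add_assoc, ← hA,
      add_sub_cancel] at h3
    exact h3
  refine ⟨A, by simp [hA], fun j => hball j (mem_ball_self (by positivity)), fun j =>
    le_infDist_frontier_of_ball_subset hD ⟨y, hy⟩ (hball j), fun j => ?_⟩
  have : A j - y = ((2 ^ j)⁻¹ : ℝ) • (X - y) := by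
    rw [hA, sub_smul, one_smul, smul_sub]; abel
  rw [dist_eq_norm, this, norm_smul, ← dist_eq_norm, norm_inv,
    Real.norm_of_nonneg (by positivity : (0:ℝ) ≤ 2 ^ j)]
  ring

/-- Corkscrew points of `D` at `y` at the scales `c₀ δ / 2 ^ j`, preceded by `A 0 = X`. -/
theorem exists_corkscrews {n : ℕ} {D : Set (EuclideanSpace ℝ (Fin (n+1)))} (hD : IsOpen D)
    {cc c₀ δ : ℝ} (hcc : 0 < cc) (hc₀ : 0 < c₀) (hδ : 0 < δ) (hcork : CorkscrewIn n D D cc)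
    (hdiam : ENNReal.ofReal (c₀ * δ) < Metric.ediam (frontier D))
    {X y : EuclideanSpace ℝ (Fin (n+1))} (hX : X ∈ D) (hy : y ∈ frontier D) :
    ∃ A : ℕ → EuclideanSpace ℝ (Fin (n+1)), A 0 = X ∧ (∀ j, A j ∈ D) ∧
      (∀ j, 2 * cc * c₀ * (δ / 2 ^ (j + 1)) ≤ infDist (A (j + 1)) (frontier D)) ∧
      ∀ j, dist (A (j + 1)) y ≤ 2 * c₀ * (δ / 2 ^ (j + 1)) := by
  have h : ∀ j : ℕ, ∃ Z, ball Z (cc * (2 * c₀ * (δ / 2 ^ (j + 1)))) ⊆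
      ball y (2 * c₀ * (δ / 2 ^ (j + 1))) ∩ D := by
    intro j
    refine hcork y hy _ (by positivity) (lt_of_le_of_lt (ENNReal.ofReal_le_ofReal ?_) hdiam)
    have : δ / 2 ^ j ≤ δ := div_le_self hδ.le (one_le_pow₀ (by norm_num))
    calc 2 * c₀ * (δ / 2 ^ (j + 1)) = c₀ * (δ / 2 ^ j) := by rw [pow_succ]; field_simp
      _ ≤ c₀ * δ := by gcongr
  choose Z hZ using h
  have hZm : ∀ j, Z j ∈ ball y (2 * c₀ * (δ / 2 ^ (j + 1))) ∩ D := fun j =>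
    hZ j (mem_ball_self (by positivity))
  obtain ⟨A, hA0, hA⟩ : ∃ A : ℕ → EuclideanSpace ℝ (Fin (n+1)), A 0 = X ∧ ∀ j, A (j + 1) = Z j :=
    ⟨fun j => Nat.casesOn j X Z, rfl, fun _ => rfl⟩
  refine ⟨A, hA0, ?_, fun j => ?_, fun j => hA j ▸ (mem_ball.1 (hZm j).1).le⟩
  · rintro (_ | j)
    · exact hA0 ▸ hX
    · exact hA j ▸ (hZm j).2
  · have := le_infDist_frontier_of_ball_subset hD ⟨y, hy⟩
      ((hZ j).trans inter_subset_right)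
    rw [hA]
    calc 2 * cc * c₀ * (δ / 2 ^ (j + 1)) = cc * (2 * c₀ * (δ / 2 ^ (j + 1))) := by ring
      _ ≤ _ := this

/-! ### The weak local John condition -/

/-- IBPCAD implies the weak local John condition: if `Ω` is a connected open set with ADR
boundary having Interior Big Pieces of Chord-Arc Domains with parameters `η, C, R` and uniform
chord-arc constants `(M,N,cc,cA,CA)`, then there are `θ ∈ (0,1]` and `λ ∈ (0,1)`, depending
only on these parameters and `n`, such that every `X ∈ Ω` with `δ(X) < diam ∂Ω` is a
`(θ,λ,R)`-weak local John point. -/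
theorem ibpcad_implies_weak_local_john
    (n : ℕ) (η C R M cc cA CA : ℝ) (N : ℕ → ℕ)
    (hη : 0 < η) (hC : 0 < C) (hR : 2 ≤ R) (hM : 1 ≤ M)
    (hcc : 0 < cc) (hcA : 0 < cA) (hCA : 0 < CA) :
    ∃ θ lam : ℝ, 0 < θ ∧ θ ≤ 1 ∧ 0 < lam ∧ lam < 1 ∧
      ∀ (Ω : Set (EuclideanSpace ℝ (Fin (n+1)))), IsOpen Ω → IsConnected Ω →
        ADRSet n (frontier Ω) cA CA →
        -- the IBPCAD hypothesis
        (∀ X ∈ Ω, ENNReal.ofReal (Metric.infDist X (frontier Ω)) < EMetric.diam (frontier Ω) →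
          ∃ ΩX : Set (EuclideanSpace ℝ (Fin (n+1))), ΩX ⊆ Ω ∧
            IsCAD n ΩX M N cc cA CA ∧ X ∈ ΩX ∧
            η * Metric.infDist X (frontier Ω) ≤ Metric.infDist X (frontier ΩX) ∧
            Metric.diam ΩX ≤ C * Metric.infDist X (frontier Ω) ∧
            ENNReal.ofReal η *
              μH[(n : ℝ)] (Metric.ball X (R * Metric.infDist X (frontier Ω)) ∩ frontier Ω)
              ≤ μH[(n : ℝ)] (frontier ΩX ∩
                  (Metric.ball X (R * Metric.infDist X (frontier Ω)) ∩ frontier Ω))) →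
        -- conclusion: every X is a (θ, λ, R)-weak local John point
        ∀ X ∈ Ω, ENNReal.ofReal (Metric.infDist X (frontier Ω)) < EMetric.diam (frontier Ω) →
          ∃ F : Set (EuclideanSpace ℝ (Fin (n+1))), MeasurableSet F ∧
            F ⊆ Metric.ball X (R * Metric.infDist X (frontier Ω)) ∩ frontier Ω ∧
            ENNReal.ofReal θ *
              μH[(n : ℝ)] (Metric.ball X (R * Metric.infDist X (frontier Ω)) ∩ frontier Ω)
              ≤ μH[(n : ℝ)] F ∧
            ∀ y ∈ F, Nonempty (CarrotPath n Ω lam y X) := by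
  obtain ⟨K, hK⟩ := exists_measure_le_of_adrSet n
  -- scales up to `c₀ * δ` lie below the diameter of `∂D`
  obtain ⟨c₀, hc₀, hc₁, hcK⟩ : ∃ c₀ : ℝ, 0 < c₀ ∧ c₀ ≤ 1 ∧ K * CA * c₀ < η * cA := by
    have hKC : 0 ≤ (K : ℝ) * CA := by positivity
    have hb : 0 < η * cA := by positivity
    refine ⟨min 1 (η * cA / (K * CA + 1)), by positivity, min_le_left _ _, ?_⟩
    calc K * CA * min 1 (η * cA / (K * CA + 1)) ≤ K * CA * (η * cA / (K * CA + 1)) := by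
          gcongr; exact min_le_right _ _
      _ < η * cA := by
          rw [mul_div_assoc', div_lt_iff₀ (by positivity)]; nlinarith
  obtain ⟨a, ha⟩ : ∃ a, a = min η (2 * cc * c₀) := ⟨_, rfl⟩
  have ha0 : 0 < a := by rw [ha]; positivity
  -- `2 ^ k` bounds the separation of consecutive points `A j` relative to their distance to `∂D`
  obtain ⟨k, hk⟩ := pow_unbounded_of_one_lt (4 * R / a) (one_lt_two : (1 : ℝ) < 2)
  -- `lam * G ≤ a` is the condition on `lam` in `exists_carrot_of_corkscrews`
  obtain ⟨G, hG⟩ : ∃ G, G = 2 * N k * (M * (M * (M + 1)) ^ N k * R) * (M * (M + 1)) ^ N k :=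
    ⟨_, rfl⟩
  have hG0 : 0 ≤ G := by rw [hG]; positivity
  refine ⟨min η 1, min (1 / 2) (a / (G + 1)), by positivity, min_le_right _ _, by positivity,
    (min_le_left _ _).trans_lt (by norm_num), ?_⟩
  intro Ω hΩ hΩc hΩA hI X hX hXd
  obtain ⟨D, hDΩ, ⟨hD, hDc, hDH, hDk, -, hDA⟩, hXD, hXη, -, hσ⟩ := hI X hX hXd
  have hΩF : (frontier Ω).Nonempty := by
    by_contra h
    rw [not_nonempty_iff_eq_empty.1 h] at hXd
    exact absurd (hXd.trans_eq Metric.ediam_empty) not_lt_zero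
  have hδ : 0 < infDist X (frontier Ω) := by
    rw [← isClosed_frontier.notMem_iff_infDist_pos hΩF, hΩ.frontier_eq]
    exact fun h => h.2 hX
  obtain ⟨δ, hδe⟩ : ∃ δ, δ = infDist X (frontier Ω) := ⟨_, rfl⟩
  refine ⟨frontier D ∩ (ball X (R * infDist X (frontier Ω)) ∩ frontier Ω),
    isClosed_frontier.measurableSet.inter
      (measurableSet_ball.inter isClosed_frontier.measurableSet), inter_subset_right,
    le_trans ?_ hσ, ?_⟩
  · gcongr; exact min_le_left _ _
  rintro y ⟨hyD, hyB, -⟩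
  have hsurf := le_measure_surfaceBall hR hΩA isClosed_frontier hΩF hδ hXd
  rw [mem_ball, dist_comm] at hyB
  rw [← hδe] at hδ hXη hyB hsurf hσ
  have haη : a ≤ η := ha ▸ min_le_left _ _
  have hac : a ≤ 2 * cc * c₀ := ha ▸ min_le_right _ _
  obtain ⟨A, hA0, hAD, hAa, hAR⟩ : ∃ A : ℕ → EuclideanSpace ℝ (Fin (n+1)), A 0 = X ∧
      (∀ j, A j ∈ D) ∧ (∀ j, a * (δ / 2 ^ j) ≤ infDist (A j) (frontier D)) ∧
      ∀ j, dist (A j) y ≤ R * (δ / 2 ^ j) := by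
    rcases eq_or_ne n 0 with rfl | hn
    · obtain ⟨A, hA0, hAD, hAa, hAR⟩ := exists_corkscrews_of_convex hD
        (convex_of_isPreconnected_fin_one hDc.isPreconnected) hXD hyD
        (lt_of_lt_of_le (by positivity) hXη)
      refine ⟨A, hA0, hAD, fun j => le_trans ?_ (hAa j), fun j => ?_⟩
      · rw [mul_div_assoc']
        gcongr
        exact (mul_le_mul_of_nonneg_right haη hδ.le).trans hXη
      · rw [hAR, mul_div_assoc']
        gcongr
    · have hdiam : ENNReal.ofReal (c₀ * δ) < Metric.ediam (frontier D) := by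
        refine lt_ediam_of_measure_le hn hK hDA hCA hc₀ hc₁ hδ (by positivity) hcK ?_
        calc ENNReal.ofReal (η * cA * δ ^ n)
            = ENNReal.ofReal η * ENNReal.ofReal (cA * δ ^ n) := by
              rw [← ENNReal.ofReal_mul hη.le, mul_assoc]
          _ ≤ _ := by gcongr
          _ ≤ _ := hσ
          _ ≤ _ := measure_mono inter_subset_left
      obtain ⟨A, hA0, hAD, hAa, hAR⟩ := exists_corkscrews hD hcc hc₀ hδ hDk hdiam hXD hyD
      refine ⟨A, hA0, hAD, ?_, ?_⟩
      · rintro (_ | j)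
        · rw [hA0, pow_zero, div_one]
          exact (mul_le_mul_of_nonneg_right haη hδ.le).trans hXη
        · exact (mul_le_mul_of_nonneg_right hac (by positivity)).trans (hAa j)
      · rintro (_ | j)
        · rw [hA0, pow_zero, div_one, dist_comm, dist_comm]; exact hyB.le
        · exact (hAR j).trans (mul_le_mul_of_nonneg_right (by linarith) (by positivity))
  rw [← hA0]
  refine exists_carrot_of_corkscrews hΩ hΩF hD hDΩ hM hDH hyD ha0 (by linarith) hδ
    ((div_lt_iff₀ ha0).1 hk).le (by positivity) ?_ hAD hAa hAR
  calc _ = min (1 / 2) (a / (G + 1)) * G := by rw [hG]; ring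
    _ ≤ a / (G + 1) * G := by gcongr; exact min_le_right _ _
    _ ≤ a := by rw [div_mul_eq_mul_div, div_le_iff₀ (by positivity)]; nlinarith
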